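/- Let 𝓗 be a complex Hilbert space and U a strongly continuous unitary representation of the additive group ℝᵏ on 𝓗. Let f ∈ 𝓗, C ≥ 0, and let ρ ∈ L¹(ℝᵏ) be a nonnegative integrable function with ρ(λ) ≤ C for almost every λ ∈ ℝᵏ, such that ⟪f, U(x) f⟫ = ∫_{ℝᵏ} e^{i x·λ} ρ(λ) dλ for every x ∈ ℝᵏ. Then for every g ∈ 𝓗: ∫_{ℝᵏ} |⟪f, U(x) g⟫|² dx ≤ (2π)ᵏ C ‖g‖². -/

import Mathlib

open MeasureTheory
open scoped ENNReal NNReal InnerProductSpace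

/-!
Put `F x = U (-x) f`. The hypothesis on `f` says that `⟪F x, F y⟫` is the inverse Fourier
transform of a density `ρ ≤ C` at `x - y`, so by Plancherel
`‖∫ φ(x) F(x) dx‖² = ∫ |𝓕 φ|² ρ ≤ C ‖φ‖₂²` for every Schwartz function `φ`.
Hence `φ ↦ ⟪g, ∫ φ(x) F(x) dx⟫ = ∫ φ(x) ⟪g, F x⟫ dx` is an `L²`-bounded functional of norm at most
`√C ‖g‖`, and by duality `x ↦ ⟪g, F x⟫` has `L²` norm at most `√C ‖g‖`. The factor `(2π)ᵏ` is the
Jacobian between the frequency variables of `e^{i x·λ}` and of `e^{2πi x·ξ}`.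
-/

section

open FourierTransform SchwartzMap
open scoped ContDiff ComplexConjugate

theorem continuous_of_continuous_inner {𝕜 X E : Type*} [RCLike 𝕜] [TopologicalSpace X]
    [NormedAddCommGroup E] [InnerProductSpace 𝕜 E] {F : X → E}
    (hF : Continuous fun p : X × X => ⟪F p.1, F p.2⟫_𝕜) : Continuous F := by
  refine continuous_iff_continuousAt.2 fun x => tendsto_iff_norm_sub_tendsto_zero.2 ?_
  have hnorm : ∀ y, ‖F y - F x‖ =
      √(RCLike.re (⟪F y, F y⟫_𝕜 - ⟪F y, F x⟫_𝕜 - ⟪F x, F y⟫_𝕜 + ⟪F x, F x⟫_𝕜)) := fun y => by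
    rw [norm_eq_sqrt_re_inner (𝕜 := 𝕜), inner_sub_sub_self]
  have hcont : Continuous fun y => ‖F y - F x‖ := by
    simp only [hnorm]
    have hdiag : Continuous fun y => ⟪F y, F y⟫_𝕜 :=
      hF.comp (by fun_prop : Continuous fun y => (y, y))
    have hleft : Continuous fun y => ⟪F y, F x⟫_𝕜 :=
      hF.comp (by fun_prop : Continuous fun y => (y, x))
    have hright : Continuous fun y => ⟪F x, F y⟫_𝕜 :=
      hF.comp (by fun_prop : Continuous fun y => (x, y))
    fun_prop
  simpa using hcont.tendsto x

theorem inner_integral_smul_self {α E : Type*} [MeasurableSpace α] {μ : Measure α}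
    [NormedAddCommGroup E] [InnerProductSpace ℂ E] [CompleteSpace E] {φ : α → ℂ} {F : α → E}
    (h : Integrable (fun x => φ x • F x) μ) :
    ⟪∫ x, φ x • F x ∂μ, ∫ x, φ x • F x ∂μ⟫_ℂ =
      ∫ x, conj (φ x) * ∫ y, φ y * ⟪F x, F y⟫_ℂ ∂μ ∂μ := by
  set v := ∫ x, φ x • F x ∂μ
  calc ⟪v, v⟫_ℂ = ∫ x, conj (φ x) * ⟪F x, v⟫_ℂ ∂μ := by
        rw [← inner_conj_symm, ← integral_inner h, ← integral_conj]
        simp only [inner_conj_symm, inner_smul_left]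
    _ = _ := by simp only [v, ← integral_inner h, inner_smul_right]

theorem ae_eq_of_forall_integral_schwartzMap_mul_eq {V : Type*} [NormedAddCommGroup V]
    [NormedSpace ℝ V] [FiniteDimensional ℝ V] [MeasurableSpace V] [BorelSpace V] {μ : Measure V}
    {f h : V → ℂ} (hf : LocallyIntegrable f μ) (hh : LocallyIntegrable h μ)
    (heq : ∀ φ : 𝓢(V, ℂ), ∫ x, φ x * f x ∂μ = ∫ x, φ x * h x ∂μ) : f =ᵐ[μ] h :=
  ae_eq_of_integral_contDiff_smul_eq hf hh fun _ hg hg_supp =>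
    heq ((hg_supp.comp_left (g := Complex.ofRealCLM) rfl).toSchwartzMap (by fun_prop))

theorem eLpNorm_two_le_of_forall_schwartzMap {V : Type*} [NormedAddCommGroup V] [NormedSpace ℝ V]
    [FiniteDimensional ℝ V] [MeasurableSpace V] [BorelSpace V] {μ : Measure V}
    [μ.HasTemperateGrowth] [IsFiniteMeasureOnCompacts μ] {p q : ℝ≥0∞} [p.HolderConjugate q]
    {h : V → ℂ} (hh : MemLp h p μ) {M : ℝ} (hM : 0 ≤ M)
    (hbound : ∀ φ : 𝓢(V, ℂ), ‖∫ x, φ x * h x ∂μ‖ ≤ M * ‖φ.toLp 2 μ‖) :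
    eLpNorm h 2 μ ≤ ENNReal.ofReal M := by
  have hint : ∀ φ : 𝓢(V, ℂ), Integrable (fun x => φ x * h x) μ := fun φ =>
    (φ.memLp q μ).integrable_mul hh
  let Λ : 𝓢(V, ℂ) →ₗ[ℂ] ℂ :=
    { toFun φ := ∫ x, φ x * h x ∂μ
      map_add' φ ψ := by simp only [add_apply, add_mul, integral_add (hint φ) (hint ψ)]
      map_smul' c φ := by
        simp only [smul_apply, smul_eq_mul, mul_assoc, integral_const_mul, RingHom.id_apply] }
  have hdense : DenseRange (toLpCLM ℂ (E := V) ℂ 2 μ).toLinearMap :=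
    denseRange_toLpCLM ENNReal.ofNat_ne_top
  let u : Lp ℂ 2 μ := (InnerProductSpace.toDual ℂ _).symm
    (Λ.extendOfNorm (toLpCLM ℂ (E := V) ℂ 2 μ).toLinearMap)
  have hu_norm : ‖u‖ ≤ M := by
    rw [LinearIsometryEquiv.norm_map]
    exact LinearMap.opNorm_extendOfNorm_le hdense hM hbound
  have hu_apply : ∀ φ : 𝓢(V, ℂ), ∫ x, φ x * conj (u x) ∂μ = ∫ x, φ x * h x ∂μ := fun φ =>
    calc ∫ x, φ x * conj (u x) ∂μ = ⟪u, φ.toLp 2 μ⟫_ℂ := by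
          rw [L2.inner_def]
          refine integral_congr_ae ?_
          filter_upwards [φ.coeFn_toLp 2 μ] with x hx
          rw [hx, RCLike.inner_apply]
      _ = Λ φ := by
          rw [InnerProductSpace.toDual_symm_apply]
          exact LinearMap.extendOfNorm_eq hdense ⟨M, hbound⟩ φ
  have hu_ae : (fun x => conj (u x)) =ᵐ[μ] h :=
    ae_eq_of_forall_integral_schwartzMap_mul_eq ((Lp.memLp u).star.locallyIntegrable one_le_two)
      (hh.locallyIntegrable (ENNReal.HolderConjugate.one_le p q)) hu_apply
  calc eLpNorm h 2 μ = ‖u‖ₑ := by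
        rw [Lp.enorm_def]
        refine eLpNorm_congr_norm_ae ?_
        filter_upwards [hu_ae] with x hx
        rw [← hx, RCLike.norm_conj]
    _ ≤ ENNReal.ofReal M := by
        rw [← ofReal_norm]
        exact ENNReal.ofReal_le_ofReal hu_norm

variable {V : Type*} [NormedAddCommGroup V] [InnerProductSpace ℝ V] [FiniteDimensional ℝ V]
  [MeasurableSpace V] [BorelSpace V]

theorem continuous_fourier_of_integrable {φ : V → ℂ} (hφ : Integrable φ) : Continuous (𝓕 φ) :=
  VectorFourier.fourierIntegral_continuous Real.continuous_fourierChar continuous_inner hφ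

theorem integral_mul_fourierInv_sub {φ ρ : V → ℂ} (hφ : Integrable φ) (hρ : Integrable ρ) (x : V) :
    ∫ y, φ y * 𝓕⁻ ρ (x - y) = 𝓕⁻ (fun ξ => 𝓕 φ ξ * ρ ξ) x := by
  have hmod : Integrable fun ξ => Real.fourierChar ⟪ξ, x⟫_ℝ • ρ ξ := by
    simpa using (Real.fourierIntegral_convergent_iff (-x)).2 hρ
  have hshift : ∀ y, 𝓕⁻ ρ (x - y) = 𝓕 (fun ξ => Real.fourierChar ⟪ξ, x⟫_ℝ • ρ ξ) y := fun y => by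
    simp only [Real.fourierInv_eq, Real.fourier_eq, smul_smul, ← AddChar.map_add_eq_mul,
      sub_eq_neg_add, inner_add_right, inner_neg_right]
  calc ∫ y, φ y * 𝓕⁻ ρ (x - y)
      = ∫ ξ, 𝓕 φ ξ • (Real.fourierChar ⟪ξ, x⟫_ℝ • ρ ξ) := by
        simp only [hshift]
        simpa using! (VectorFourier.integral_fourierIntegral_smul_eq_flip (L := innerₗ V)
          Real.continuous_fourierChar continuous_inner hφ hmod).symm
    _ = 𝓕⁻ (fun ξ => 𝓕 φ ξ * ρ ξ) x := by
        simp only [Real.fourierInv_eq, smul_eq_mul, mul_smul_comm]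

theorem integral_conj_mul_fourierInv {φ ψ : V → ℂ} (hφ : Integrable φ) (hψ : Integrable ψ) :
    ∫ x, conj (φ x) * 𝓕⁻ ψ x = ∫ ξ, conj (𝓕 φ ξ) * ψ ξ := by
  simp only [mul_comm (conj _)]
  simpa using! (VectorFourier.integral_sesq_fourierIntegral_eq_neg_flip (innerSL ℂ)
    (L := innerₗ V) Real.continuous_fourierChar continuous_inner hφ hψ).symm

theorem integrable_fourier_mul {φ ρ : V → ℂ} (hφ : Integrable φ) (hρ : Integrable ρ) :
    Integrable fun ξ => 𝓕 φ ξ * ρ ξ :=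
  hρ.bdd_mul (continuous_fourier_of_integrable hφ).aestronglyMeasurable
    (.of_forall fun ξ => VectorFourier.norm_fourierIntegral_le_integral_norm _ _ _ _ ξ)

theorem integral_conj_mul_integral_mul_fourierInv_sub {φ ρ : V → ℂ} (hφ : Integrable φ)
    (hρ : Integrable ρ) :
    ∫ x, conj (φ x) * ∫ y, φ y * 𝓕⁻ ρ (x - y) = ∫ ξ, (‖𝓕 φ ξ‖ ^ 2 : ℝ) * ρ ξ := by
  simp only [integral_mul_fourierInv_sub hφ hρ]
  rw [integral_conj_mul_fourierInv hφ (integrable_fourier_mul hφ hρ)]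
  simp only [← mul_assoc, Complex.conj_mul', Complex.ofReal_pow]

theorem integral_cexp_inner_mul_eq_fourierInv (ρ : V → ℂ) (x : V) :
    ∫ l, Complex.exp (Complex.I * (⟪x, l⟫_ℝ : ℂ)) * ρ l =
      𝓕⁻ (fun ξ => ((2 * Real.pi) ^ Module.finrank ℝ V : ℝ) * ρ ((2 * Real.pi) • ξ)) x := by
  have h := Measure.integral_comp_smul_of_nonneg volume
    (fun l => Complex.exp (Complex.I * (⟪x, l⟫_ℝ : ℂ)) * ρ l) (2 * Real.pi) (hR := by positivity)
  rw [eq_inv_smul_iff₀ (by positivity), ← integral_smul] at h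
  rw [← h, Real.fourierInv_eq']
  congr 1 with ξ
  rw [inner_smul_right, real_inner_comm, Complex.real_smul, smul_eq_mul, mul_comm Complex.I]
  ring

/-- The family `F` of vectors indexed by `V` is stationary with spectral density `ρ`: its Gram
kernel `⟪F x, F y⟫` depends only on `x - y`, through the inverse Fourier transform of the
integrable function `ρ`. The normalisation is Mathlib's, with characters `e^{2πi x·ξ}`. -/
structure HasSpectralDensity {E : Type*} [NormedAddCommGroup E] [InnerProductSpace ℂ E]
    (F : V → E) (ρ : V → ℝ) : Prop where
  integrable : Integrable ρ
  inner_eq : ∀ x y, ⟪F x, F y⟫_ℂ = 𝓕⁻ (fun ξ => (ρ ξ : ℂ)) (x - y)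

namespace HasSpectralDensity

variable {E : Type*} [NormedAddCommGroup E] [InnerProductSpace ℂ E] {F : V → E} {ρ : V → ℝ}

theorem continuous (hF : HasSpectralDensity F ρ) : Continuous F := by
  refine continuous_of_continuous_inner (𝕜 := ℂ) ?_
  simp only [hF.inner_eq, Real.fourierInv_eq_fourier_neg]
  exact (continuous_fourier_of_integrable hF.integrable.ofReal).comp (by fun_prop)

theorem norm_eq (hF : HasSpectralDensity F ρ) (x : V) : ‖F x‖ = ‖F 0‖ := by
  simp only [norm_eq_sqrt_re_inner (𝕜 := ℂ), hF.inner_eq, sub_self]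

theorem memLp_inner_top (hF : HasSpectralDensity F ρ) (g : E) :
    MemLp (fun x => ⟪g, F x⟫_ℂ) ∞ :=
  memLp_top_of_bound (continuous_const.inner hF.continuous).aestronglyMeasurable (‖g‖ * ‖F 0‖)
    (.of_forall fun x => hF.norm_eq x ▸ norm_inner_le_norm g (F x))

theorem integrable_smul (hF : HasSpectralDensity F ρ) {φ : V → ℂ} (hφ : Integrable φ) :
    Integrable fun x => φ x • F x :=
  hφ.smul_bdd ‖F 0‖ hF.continuous.aestronglyMeasurable (.of_forall fun x => (hF.norm_eq x).le)

theorem completion (hF : HasSpectralDensity F ρ) :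
    HasSpectralDensity (fun x => (F x : UniformSpace.Completion E)) ρ :=
  ⟨hF.integrable, fun x y => by rw [UniformSpace.Completion.inner_coe, hF.inner_eq]⟩

section Complete

variable [CompleteSpace E]

theorem norm_integral_smul_sq (hF : HasSpectralDensity F ρ) {φ : V → ℂ} (hφ : Integrable φ) :
    ‖∫ x, φ x • F x‖ ^ 2 = ∫ ξ, ‖𝓕 φ ξ‖ ^ 2 * ρ ξ := by
  have hρ : Integrable fun ξ => (ρ ξ : ℂ) := hF.integrable.ofReal
  have h := inner_integral_smul_self (hF.integrable_smul hφ)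
  simp only [hF.inner_eq] at h
  rw [integral_conj_mul_integral_mul_fourierInv_sub hφ hρ, inner_self_eq_norm_sq_to_K] at h
  simp only [← Complex.ofReal_mul, integral_complex_ofReal] at h
  exact Complex.ofReal_injective ((Complex.ofReal_pow _ _).trans h)

theorem norm_integral_schwartzMap_smul_le (hF : HasSpectralDensity F ρ) {C : ℝ}
    (hρC : ∀ᵐ ξ, ρ ξ ≤ C) (φ : 𝓢(V, ℂ)) :
    ‖∫ x, φ x • F x‖ ≤ √C * ‖φ.toLp 2‖ := by
  have hφ : Integrable fun ξ => ‖𝓕 φ ξ‖ ^ 2 := ((𝓕 φ).memLp 2).integrable_norm_pow two_ne_zero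
  have hφρ : Integrable fun ξ => ‖𝓕 φ ξ‖ ^ 2 * ρ ξ :=
    hF.integrable.bdd_mul hφ.aestronglyMeasurable (c := (‖φ.toLp 1‖) ^ 2) (.of_forall fun ξ => by
      rw [norm_pow, norm_norm]
      gcongr
      exact norm_fourier_apply_le_toLp_one φ ξ)
  have hφ_norm : ‖φ.toLp 2‖ = √(∫ x, ‖φ x‖ ^ 2) := by
    simp [norm_toLp' two_ne_zero ENNReal.ofNat_ne_top, Real.sqrt_eq_rpow]
  rw [hφ_norm, ← Real.sqrt_mul' _ (by positivity)]
  refine Real.le_sqrt_of_sq_le ?_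
  calc ‖∫ x, φ x • F x‖ ^ 2 = ∫ ξ, ‖𝓕 φ ξ‖ ^ 2 * ρ ξ := by
        simpa only [SchwartzMap.fourier_coe] using hF.norm_integral_smul_sq φ.integrable
    _ ≤ ∫ ξ, C * ‖𝓕 φ ξ‖ ^ 2 := by
        refine integral_mono_ae hφρ (hφ.const_mul C) ?_
        filter_upwards [hρC] with ξ hξ
        rw [mul_comm]
        gcongr
    _ = C * ∫ x, ‖φ x‖ ^ 2 := by rw [integral_const_mul, integral_norm_sq_fourier]

theorem eLpNorm_inner_le (hF : HasSpectralDensity F ρ) {C : ℝ} (hρC : ∀ᵐ ξ, ρ ξ ≤ C) (g : E) :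
    eLpNorm (fun x => ⟪g, F x⟫_ℂ) 2 ≤ ENNReal.ofReal (√C * ‖g‖) := by
  have hpull : ∀ φ : 𝓢(V, ℂ), ∫ x, φ x * ⟪g, F x⟫_ℂ = ⟪g, ∫ x, φ x • F x⟫_ℂ := fun φ => by
    simp only [← integral_inner (hF.integrable_smul φ.integrable), inner_smul_right]
  have hpair : ∀ φ : 𝓢(V, ℂ), ‖∫ x, φ x * ⟪g, F x⟫_ℂ‖ ≤ √C * ‖g‖ * ‖φ.toLp 2‖ := fun φ => by
    rw [hpull, mul_comm √C, mul_assoc]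
    exact (norm_inner_le_norm _ _).trans
      (mul_le_mul_of_nonneg_left (hF.norm_integral_schwartzMap_smul_le hρC φ) (norm_nonneg g))
  exact eLpNorm_two_le_of_forall_schwartzMap (q := 1) (hF.memLp_inner_top g) (by positivity) hpair

end Complete

theorem lintegral_enorm_inner_sq_le (hF : HasSpectralDensity F ρ) {C : ℝ} (hC : 0 ≤ C)
    (hρC : ∀ᵐ ξ, ρ ξ ≤ C) (g : E) :
    ∫⁻ x, ‖⟪g, F x⟫_ℂ‖ₑ ^ 2 ≤ ENNReal.ofReal (C * ‖g‖ ^ 2) := by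
  have h := hF.completion.eLpNorm_inner_le hρC g
  simp only [UniformSpace.Completion.inner_coe, UniformSpace.Completion.norm_coe] at h
  calc ∫⁻ x, ‖⟪g, F x⟫_ℂ‖ₑ ^ 2 = eLpNorm (fun x => ⟪g, F x⟫_ℂ) 2 ^ 2 := by
        simpa using (eLpNorm_nnreal_pow_eq_lintegral (μ := volume) (p := 2)
          (f := fun x => ⟪g, F x⟫_ℂ) two_ne_zero).symm
    _ ≤ ENNReal.ofReal (√C * ‖g‖) ^ 2 := by gcongr
    _ = ENNReal.ofReal (C * ‖g‖ ^ 2) := by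
        rw [← ENNReal.ofReal_pow (by positivity), mul_pow, Real.sq_sqrt hC]

end HasSpectralDensity

theorem inner_map_neg_left {𝕜 G H : Type*} [RCLike 𝕜] [AddGroup G] [NormedAddCommGroup H]
    [InnerProductSpace 𝕜 H] {U : G → H →L[𝕜] H} (hU0 : U 0 = 1)
    (hUadd : ∀ x y, U (x + y) = (U x).comp (U y))
    (hUunitary : ∀ x v w, ⟪U x v, U x w⟫_𝕜 = ⟪v, w⟫_𝕜) (x : G) (v w : H) :
    ⟪U (-x) v, w⟫_𝕜 = ⟪v, U x w⟫_𝕜 :=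
  calc ⟪U (-x) v, w⟫_𝕜 = ⟪U x (U (-x) v), U x w⟫_𝕜 := (hUunitary x _ _).symm
    _ = ⟪v, U x w⟫_𝕜 := by
      rw [← ContinuousLinearMap.comp_apply, ← hUadd, add_neg_cancel, hU0,
        one_apply_eq_self]

theorem hasSpectralDensity_orbit {H : Type*} [NormedAddCommGroup H] [InnerProductSpace ℂ H]
    {U : V → H →L[ℂ] H} (hU0 : U 0 = 1) (hUadd : ∀ x y, U (x + y) = (U x).comp (U y))
    (hUunitary : ∀ x v w, ⟪U x v, U x w⟫_ℂ = ⟪v, w⟫_ℂ) {f : H} {ρ : V → ℝ}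
    (hρ : Integrable ρ)
    (hspec : ∀ x, ⟪f, U x f⟫_ℂ = ∫ l, Complex.exp (Complex.I * (⟪x, l⟫_ℝ : ℂ)) * (ρ l : ℂ)) :
    HasSpectralDensity (fun x => U (-x) f)
      fun ξ => (2 * Real.pi) ^ Module.finrank ℝ V * ρ ((2 * Real.pi) • ξ) where
  integrable := (hρ.comp_smul (by positivity)).const_mul _
  inner_eq x y := by
    rw [inner_map_neg_left hU0 hUadd hUunitary, ← ContinuousLinearMap.comp_apply, ← hUadd,
      ← sub_eq_add_neg, hspec, integral_cexp_inner_mul_eq_fourierInv (fun l => (ρ l : ℂ))]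
    simp only [Complex.ofReal_mul]

theorem smoothness_estimate_general {H : Type*} [NormedAddCommGroup H] [InnerProductSpace ℂ H]
    {U : V → H →L[ℂ] H} (hU0 : U 0 = 1) (hUadd : ∀ x y, U (x + y) = (U x).comp (U y))
    (hUunitary : ∀ x v w, ⟪U x v, U x w⟫_ℂ = ⟪v, w⟫_ℂ) {f : H} {C : ℝ} (hC : 0 ≤ C) {ρ : V → ℝ}
    (hρ : Integrable ρ) (hρC : ∀ᵐ l, ρ l ≤ C)
    (hspec : ∀ x, ⟪f, U x f⟫_ℂ = ∫ l, Complex.exp (Complex.I * (⟪x, l⟫_ℝ : ℂ)) * (ρ l : ℂ))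
    (g : H) :
    ∫⁻ x, ‖⟪f, U x g⟫_ℂ‖ₑ ^ 2 ≤
      ENNReal.ofReal ((2 * Real.pi) ^ Module.finrank ℝ V * C * ‖g‖ ^ 2) := by
  have hF := hasSpectralDensity_orbit hU0 hUadd hUunitary hρ hspec
  have hbound : ∀ᵐ ξ : V, (2 * Real.pi) ^ Module.finrank ℝ V * ρ ((2 * Real.pi) • ξ) ≤
      (2 * Real.pi) ^ Module.finrank ℝ V * C := by
    filter_upwards [(Measure.quasiMeasurePreserving_smul volume Real.two_pi_pos.ne').ae hρC]
      with ξ hξ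
    gcongr
  calc ∫⁻ x, ‖⟪f, U x g⟫_ℂ‖ₑ ^ 2 = ∫⁻ x, ‖⟪g, U (-x) f⟫_ℂ‖ₑ ^ 2 := by
        refine lintegral_congr fun x => ?_
        rw [← inner_map_neg_left hU0 hUadd hUunitary, ← ofReal_norm, ← ofReal_norm, norm_inner_symm]
    _ ≤ _ := hF.lintegral_enorm_inner_sq_le (by positivity) hbound g

end

/-- If `U` is a strongly continuous unitary representation of `ℝᵏ` on a complex Hilbert
space and `f` has absolutely continuous spectral measure with density `ρ` bounded by `C`
(expressed via `⟪f, U(x) f⟫ = ∫ e^{i x·λ} ρ(λ) dλ`), then for every `g`: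
`∫_{ℝᵏ} |⟪f, U(x) g⟫|² dx ≤ (2π)ᵏ C ‖g‖²`. -/
theorem smoothness_estimate
    {𝓗 : Type*} [NormedAddCommGroup 𝓗] [InnerProductSpace ℂ 𝓗]
    (k : ℕ)
    (U : EuclideanSpace ℝ (Fin k) → (𝓗 →L[ℂ] 𝓗))
    (hU0 : U 0 = 1)
    (hUadd : ∀ x y, U (x + y) = (U x).comp (U y))
    (hUunitary : ∀ x, ∀ v w : 𝓗, ⟪U x v, U x w⟫_ℂ = ⟪v, w⟫_ℂ)
    (hUcont : ∀ v : 𝓗, Continuous fun x => U x v)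
    (f : 𝓗) (C : ℝ) (hC : 0 ≤ C)
    (ρ : EuclideanSpace ℝ (Fin k) → ℝ)
    (hρint : Integrable ρ)
    (hρ0 : ∀ᵐ l ∂(volume : Measure (EuclideanSpace ℝ (Fin k))), 0 ≤ ρ l)
    (hρC : ∀ᵐ l ∂(volume : Measure (EuclideanSpace ℝ (Fin k))), ρ l ≤ C)
    (hspec : ∀ x, ⟪f, U x f⟫_ℂ =
      ∫ l, Complex.exp (Complex.I * (⟪x, l⟫_ℝ : ℂ)) * (ρ l : ℂ)) :
    ∀ g : 𝓗,
      ∫⁻ x, (‖⟪f, U x g⟫_ℂ‖₊ : ℝ≥0∞) ^ 2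
        ≤ ENNReal.ofReal ((2 * Real.pi) ^ k * C * ‖g‖ ^ 2) := by
  simpa only [finrank_euclideanSpace_fin, enorm_eq_nnnorm] using
    smoothness_estimate_general hU0 hUadd hUunitary hC hρint hρC hspec
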